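/- arXiv:1811.10967 — 5 statements merged into one kernel-verified Lean document; each statement's English description precedes it below -/
import Mathlib

section
/- For every integer m ≥ 3, there are at least 2^m partitions of m(m+1)/2 that are comparable in dominance order to the staircase partition ρ_m (i.e., |C(ρ_m)| ≥ 2^m). In particular, there are at least 2^{m−1} partitions of m(m+1)/2 that are strictly dominated by ρ_m. -/
/-!
Let `S m` (`belowStaircase m`) be the set of partitions of `m(m+1)/2` strictly dominated by `ρ_m`,
and `T m` (`aboveStaircase m`) the set of those strictly dominating it. Both sets at least double
in size when `m ≥ 1` grows by one.

* Each `f ∈ S m` gives the two elements `(m+1, f)` and `(m, f, 1)` of `S (m+1)`. They are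
  distinguished by the first part, and `f` can be read off from either.
* The conjugate constructions treat `T m`: an `f ∈ T m` has at most `m` parts, and adding a column
  of length `m+1`, or a column of length `m` and a box in the first row, gives two elements of
  `T (m+1)`. They are distinguished by whether row `m` (counted from zero) is empty.

For `m = 3` both sets have at least four elements, so `S m` and `T m` have at least `2^(m-1)`
elements each for `m ≥ 3`. They are disjoint by antisymmetry of dominance.
-/

/-- `f` represents a partition of `n`: a weakly decreasing sequence (0-indexed,
padded with zeros) whose parts sum to `n`. Any partition of `n` has at most `n`
nonzero parts, so we may demand `f i = 0` for `i ≥ n`. -/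
def IsPartitionOf (n : ℕ) (f : ℕ → ℕ) : Prop :=
  (∀ i j, i ≤ j → f j ≤ f i) ∧ (∀ i, n ≤ i → f i = 0) ∧ ∑ i ∈ Finset.range n, f i = n

/-- `DominatedBy f g` means `f ⊴ g` in dominance order: every partial sum of `f`
is at most the corresponding partial sum of `g`. -/
def DominatedBy (f g : ℕ → ℕ) : Prop :=
  ∀ k, ∑ i ∈ Finset.range k, f i ≤ ∑ i ∈ Finset.range k, g i

/-- The conjugate (transpose) partition: its `i`-th part (0-indexed) is the number
of parts of `f` that are `> i`. -/
noncomputable def conjugate (f : ℕ → ℕ) : ℕ → ℕ := fun i => Set.ncard {j | i < f j}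

/-- The staircase partition `ρ_m = (m, m-1, …, 2, 1)` (0-indexed). -/
def staircase (m : ℕ) : ℕ → ℕ := fun i => m - i

/-- The partitions of `m(m+1)/2` strictly dominated by the staircase. -/
def belowStaircase (m : ℕ) : Set (ℕ → ℕ) :=
  {f | IsPartitionOf (m * (m + 1) / 2) f ∧ DominatedBy f (staircase m) ∧ f ≠ staircase m}

/-- The partitions of `m(m+1)/2` strictly dominating the staircase. -/
def aboveStaircase (m : ℕ) : Set (ℕ → ℕ) :=
  {f | IsPartitionOf (m * (m + 1) / 2) f ∧ DominatedBy (staircase m) f ∧ f ≠ staircase m}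

/-! ### Generalities on partitions and staircases -/

lemma triangle_succ (m : ℕ) : (m + 1) * (m + 1 + 1) / 2 = m * (m + 1) / 2 + (m + 1) := by
  have : (m + 1) * (m + 1 + 1) = m * (m + 1) + (m + 1) * 2 := by ring
  rw [this, Nat.add_mul_div_right _ _ (by norm_num)]

lemma sum_eq_of_le {n N : ℕ} {f : ℕ → ℕ} (h : IsPartitionOf n f) (hN : n ≤ N) :
    ∑ i ∈ Finset.range N, f i = n := by
  rw [← h.2.2]
  symm
  apply Finset.sum_subset
  · intro i hi
    simp only [Finset.mem_range] at *
    omega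
  · intro i _ hi
    simp only [Finset.mem_range, not_lt] at hi
    exact h.2.1 i hi

lemma sum_range_le {n : ℕ} {f : ℕ → ℕ} (h : IsPartitionOf n f) (k : ℕ) :
    ∑ i ∈ Finset.range k, f i ≤ n := by
  rw [← sum_eq_of_le h (le_max_left n k)]
  apply Finset.sum_le_sum_of_subset
  intro i hi
  simp only [Finset.mem_range, lt_max_iff] at *
  exact Or.inr hi

lemma finite_partitions (n : ℕ) : {f | IsPartitionOf n f}.Finite := by
  have hfin : (Set.univ.pi fun _ : Fin n => Set.Iic n).Finite :=
    Set.Finite.pi fun _ => Set.finite_Iic n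
  refine Set.Finite.of_finite_image
    (f := fun (f : ℕ → ℕ) (i : Fin n) => f i) (hfin.subset ?_) ?_
  · rintro _ ⟨f, hf, rfl⟩ i -
    have h1 : f i ≤ ∑ j ∈ Finset.range n, f j :=
      Finset.single_le_sum (f := f) (fun _ _ => Nat.zero_le _) (Finset.mem_range.2 i.2)
    rw [hf.2.2] at h1
    exact h1
  · intro f hf g hg hfg
    funext i
    by_cases hi : i < n
    · exact congrFun hfg ⟨i, hi⟩
    · rw [hf.2.1 i (by omega), hg.2.1 i (by omega)]

lemma lower_finite (m : ℕ) : (belowStaircase m).Finite :=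
  (finite_partitions _).subset fun _ h => h.1

lemma upper_finite (m : ℕ) : (aboveStaircase m).Finite :=
  (finite_partitions _).subset fun _ h => h.1

lemma staircase_sum (m : ℕ) : ∑ i ∈ Finset.range m, staircase m i = m * (m + 1) / 2 := by
  induction m with
  | zero => rfl
  | succ m ih =>
    rw [Finset.sum_range_succ', triangle_succ, ← ih]
    simp [staircase]

lemma staircase_succ (m i : ℕ) :
    staircase (m + 1) i = staircase m i + if i < m + 1 then 1 else 0 := by
  unfold staircase
  split_ifs <;> omega

lemma dominated_antisymm {f g : ℕ → ℕ} (h : DominatedBy f g) (h' : DominatedBy g f) : f = g := by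
  funext i
  have e := fun k => le_antisymm (h k) (h' k)
  have := e (i + 1)
  rw [Finset.sum_range_succ, Finset.sum_range_succ, e i] at this
  omega

lemma sum_indicator (a k : ℕ) :
    ∑ i ∈ Finset.range k, (if i < a then 1 else 0) = min a k := by
  induction k with
  | zero => simp
  | succ k ih =>
    rw [Finset.sum_range_succ, ih]
    split_ifs <;> omega

lemma two_mul_ncard_le {A B : Set (ℕ → ℕ)} (hB : B.Finite)
    (F G : (ℕ → ℕ) → (ℕ → ℕ)) (hF : ∀ f ∈ A, F f ∈ B) (hG : ∀ f ∈ A, G f ∈ B)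
    (iF : Set.InjOn F A) (iG : Set.InjOn G A) (hFG : ∀ f ∈ A, ∀ g ∈ A, F f ≠ G g) :
    2 * A.ncard ≤ B.ncard := by
  have hsub : F '' A ∪ G '' A ⊆ B := by
    rintro _ (⟨f, hf, rfl⟩ | ⟨f, hf, rfl⟩)
    · exact hF f hf
    · exact hG f hf
  have hdis : Disjoint (F '' A) (G '' A) := by
    rw [Set.disjoint_left]
    rintro _ ⟨f, hf, rfl⟩ ⟨g, hg, h⟩
    exact hFG f hf g hg h.symm
  have h1 := Set.ncard_le_ncard hsub hB
  rw [Set.ncard_union_eq hdis (hB.subset fun x hx => hsub (Or.inl hx))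
    (hB.subset fun x hx => hsub (Or.inr hx)), iF.ncard_image,
    iG.ncard_image] at h1
  omega

/-! ### Doubling below the staircase -/

/-- The sequence `(a, f 0, f 1, …)`. -/
def prependPart (a : ℕ) (f : ℕ → ℕ) : ℕ → ℕ
  | 0 => a
  | i + 1 => f i

/-- The partition `f` with one further part equal to `1`, placed at the first index where `f`
vanishes. -/
def appendOne (f : ℕ → ℕ) : ℕ → ℕ :=
  fun i => f i + if f i = 0 ∧ (i = 0 ∨ f (i - 1) ≠ 0) then 1 else 0

lemma sum_prepend (a : ℕ) (f : ℕ → ℕ) (k : ℕ) :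
    ∑ i ∈ Finset.range (k + 1), prependPart a f i = a + ∑ i ∈ Finset.range k, f i := by
  rw [Finset.sum_range_succ', add_comm]
  rfl

lemma staircase_eq_prepend (m : ℕ) : staircase (m + 1) = prependPart (m + 1) (staircase m) := by
  funext i
  cases i with
  | zero => rfl
  | succ i => simp [staircase, prependPart]

lemma appendOne_eq {n : ℕ} {f : ℕ → ℕ} (h : IsPartitionOf n f) :
    ∃ l ≤ n, f l = 0 ∧ (∀ i < l, f i ≠ 0) ∧
      ∀ i, appendOne f i = f i + if i = l then 1 else 0 := by
  classical
  have hex : ∃ l, f l = 0 := ⟨n, h.2.1 n le_rfl⟩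
  refine ⟨Nat.find hex, Nat.find_min' hex (h.2.1 n le_rfl), Nat.find_spec hex,
    fun i hi => Nat.find_min hex hi, fun i => ?_⟩
  have hiff : (f i = 0 ∧ (i = 0 ∨ f (i - 1) ≠ 0)) ↔ i = Nat.find hex := by
    constructor
    · rintro ⟨h0, h1⟩
      have hle := Nat.find_min' hex h0
      rcases h1 with h1 | h1
      · omega
      · by_contra hne
        have := h.1 (Nat.find hex) (i - 1) (by omega)
        rw [Nat.find_spec hex] at this
        omega
    · intro hi
      refine ⟨hi ▸ Nat.find_spec hex, ?_⟩
      by_cases h0 : i = 0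
      · exact Or.inl h0
      · exact Or.inr (Nat.find_min hex (by omega))
  simp only [appendOne, hiff]

lemma sum_appendOne {f : ℕ → ℕ} {l : ℕ}
    (hl : ∀ i, appendOne f i = f i + if i = l then 1 else 0) (k : ℕ) :
    ∑ i ∈ Finset.range k, appendOne f i =
      ∑ i ∈ Finset.range k, f i + if l < k then 1 else 0 := by
  simp [hl, Finset.sum_add_distrib]

lemma appendOne_succ_eq_zero_iff {n : ℕ} {f : ℕ → ℕ} (h : IsPartitionOf n f) (i : ℕ) :
    appendOne f (i + 1) = 0 ↔ f i = 0 := by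
  have := h.1 i (i + 1) (by omega)
  by_cases h0 : f i = 0
  · have h1 : f (i + 1) = 0 := by omega
    simp [appendOne, h0, h1]
  · by_cases h1 : f (i + 1) = 0 <;> simp [appendOne, h0, h1]

lemma appendOne_injOn {n : ℕ} : Set.InjOn appendOne {f | IsPartitionOf n f} := by
  intro f hf g hg hfg
  funext i
  have h1 := appendOne_succ_eq_zero_iff hf i
  have h2 := appendOne_succ_eq_zero_iff hg i
  rw [hfg] at h1
  have h3 : appendOne f i = appendOne g i := congrFun hfg i
  by_cases h0 : f i = 0
  · rw [h0, h2.1 (h1.2 h0)]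
  · have h0' : g i ≠ 0 := fun h => h0 (h1.1 (h2.2 h))
    simpa [appendOne, h0, h0'] using h3

lemma prepend_injective (a : ℕ) : Function.Injective (prependPart a) := by
  intro f g h
  funext i
  exact congrFun h (i + 1)

lemma prepend_antitone {a : ℕ} {f : ℕ → ℕ} (hf : ∀ i j, i ≤ j → f j ≤ f i) (ha : f 0 ≤ a) :
    ∀ i j, i ≤ j → prependPart a f j ≤ prependPart a f i := by
  rintro (_ | i) (_ | j) hij
  · exact le_rfl
  · exact (hf 0 j (by omega)).trans ha
  · omega
  · exact hf i j (by omega)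

lemma head_le_of_dominated {m : ℕ} {f : ℕ → ℕ} (h : DominatedBy f (staircase m)) : f 0 ≤ m := by
  simpa [staircase] using h 1

lemma prepend_mem {m : ℕ} {f : ℕ → ℕ} (hf : f ∈ belowStaircase m) :
    prependPart (m + 1) f ∈ belowStaircase (m + 1) := by
  obtain ⟨hp, hd, hne⟩ := hf
  have h0 := head_le_of_dominated hd
  refine ⟨?_, ?_, ?_⟩
  · rw [triangle_succ]
    refine ⟨prepend_antitone hp.1 (by omega), ?_, ?_⟩
    · rintro (_ | i) hi
      · omega
      · exact hp.2.1 i (by omega)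
    · rw [← add_assoc, sum_prepend, sum_eq_of_le hp (by omega)]
      omega
  · rw [staircase_eq_prepend]
    rintro (_ | k)
    · simp
    · rw [sum_prepend, sum_prepend]
      exact Nat.add_le_add_left (hd k) _
  · rw [staircase_eq_prepend]
    exact fun h => hne (prepend_injective _ h)

lemma prepend_append_mem {m : ℕ} (hm : 1 ≤ m) {f : ℕ → ℕ} (hf : f ∈ belowStaircase m) :
    prependPart m (appendOne f) ∈ belowStaircase (m + 1) := by
  obtain ⟨hp, hd, hne⟩ := hf
  have h0 := head_le_of_dominated hd
  obtain ⟨l, hln, hl0, hlt, hl⟩ := appendOne_eq hp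
  refine ⟨?_, ?_, ?_⟩
  · rw [triangle_succ]
    refine ⟨prepend_antitone ?_ ?_, ?_, ?_⟩
    · intro i j hij
      have h1 := hp.1 i j hij
      rw [hl, hl]
      by_cases hj : j = l
      · subst hj
        by_cases hi : i = j
        · rw [hi]
        · have := hlt i (by omega)
          simp only [hi, if_true, if_false]
          omega
      · simp only [hj, if_false]
        omega
    · rw [hl]
      split_ifs with h
      · rw [h, hl0]
        omega
      · omega
    · rintro (_ | i) hi
      · omega
      · change appendOne f i = 0
        rw [hl, hp.2.1 i (by omega), if_neg (by omega)]
    · rw [← add_assoc, sum_prepend, sum_appendOne hl, sum_eq_of_le hp (by omega),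
        if_pos (by omega)]
      omega
  · rw [staircase_eq_prepend]
    rintro (_ | k)
    · simp
    · rw [sum_prepend, sum_prepend, sum_appendOne hl]
      have := hd k
      split_ifs <;> omega
  · intro h
    have := congrFun h 0
    simp [prependPart, staircase] at this

lemma lower_double {m : ℕ} (hm : 1 ≤ m) :
    2 * (belowStaircase m).ncard ≤ (belowStaircase (m + 1)).ncard := by
  refine two_mul_ncard_le (lower_finite _) (prependPart (m + 1))
    (fun f => prependPart m (appendOne f)) (fun f hf => prepend_mem hf)
    (fun f hf => prepend_append_mem hm hf) (prepend_injective _).injOn ?_ ?_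
  · intro f hf g hg h
    exact appendOne_injOn hf.1 hg.1 (prepend_injective _ h)
  · intro f _ g _ h
    have := congrFun h 0
    simp [prependPart] at this

/-! ### Doubling above the staircase -/

/-- The diagram `f` with `1` added to each of its first `a` rows. -/
def addColumn (a : ℕ) (f : ℕ → ℕ) : ℕ → ℕ := fun i => f i + if i < a then 1 else 0

lemma sum_addColumn (a : ℕ) (f : ℕ → ℕ) (k : ℕ) :
    ∑ i ∈ Finset.range k, addColumn a f i = ∑ i ∈ Finset.range k, f i + min a k := by
  simp only [addColumn, Finset.sum_add_distrib, sum_indicator]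

lemma addColumn_antitone {a : ℕ} {f : ℕ → ℕ} (hf : ∀ i j, i ≤ j → f j ≤ f i) :
    ∀ i j, i ≤ j → addColumn a f j ≤ addColumn a f i := by
  intro i j hij
  have := hf i j hij
  simp only [addColumn]
  split_ifs <;> omega

lemma addColumn_injective (a : ℕ) : Function.Injective (addColumn a) := by
  intro f g h
  funext i
  exact Nat.add_right_cancel (congrFun h i)

lemma staircase_eq_addColumn (m : ℕ) : staircase (m + 1) = addColumn (m + 1) (staircase m) :=
  funext (staircase_succ m)

/-- A partition dominating `ρ_m` has at most `m` parts, since its first `m` parts already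
exhaust the total. -/
lemma upper_eq_zero {m : ℕ} {f : ℕ → ℕ} (hf : f ∈ aboveStaircase m) {i : ℕ} (hi : m ≤ i) :
    f i = 0 := by
  obtain ⟨hp, hd, -⟩ := hf
  have h1 := hd m
  rw [staircase_sum] at h1
  have h2 := sum_range_le hp (m + 1)
  rw [Finset.sum_range_succ] at h2
  have := hp.1 m i hi
  omega

lemma addColumn_mem {m : ℕ} {f : ℕ → ℕ} (hf : f ∈ aboveStaircase m) :
    addColumn (m + 1) f ∈ aboveStaircase (m + 1) := by
  obtain ⟨hp, hd, hne⟩ := hf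
  refine ⟨?_, ?_, ?_⟩
  · rw [triangle_succ]
    refine ⟨addColumn_antitone hp.1, ?_, ?_⟩
    · intro i hi
      simp only [addColumn]
      rw [hp.2.1 i (by omega), if_neg (by omega)]
    · rw [sum_addColumn, sum_eq_of_le hp (by omega)]
      omega
  · rw [staircase_eq_addColumn]
    intro k
    rw [sum_addColumn, sum_addColumn]
    exact Nat.add_le_add_right (hd k) _
  · rw [staircase_eq_addColumn]
    exact fun h => hne (addColumn_injective _ h)

/-- Adding a column of length `1` puts a box into the first row. -/
lemma addColumn_addColumn_mem {m : ℕ} (hm : 1 ≤ m) {f : ℕ → ℕ} (hf : f ∈ aboveStaircase m) :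
    addColumn 1 (addColumn m f) ∈ aboveStaircase (m + 1) := by
  have hz := upper_eq_zero hf le_rfl
  obtain ⟨hp, hd, hne⟩ := hf
  refine ⟨?_, ?_, ?_⟩
  · rw [triangle_succ]
    refine ⟨addColumn_antitone (addColumn_antitone hp.1), ?_, ?_⟩
    · intro i hi
      simp only [addColumn]
      rw [hp.2.1 i (by omega), if_neg (by omega), if_neg (by omega)]
    · rw [sum_addColumn, sum_addColumn, sum_eq_of_le hp (by omega)]
      omega
  · rw [staircase_eq_addColumn]
    intro k
    rw [sum_addColumn, sum_addColumn, sum_addColumn]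
    have := hd k
    omega
  · intro h
    have h1 := congrFun h m
    simp only [addColumn, staircase, hz] at h1
    split_ifs at h1 <;> omega

lemma upper_double {m : ℕ} (hm : 1 ≤ m) :
    2 * (aboveStaircase m).ncard ≤ (aboveStaircase (m + 1)).ncard := by
  refine two_mul_ncard_le (upper_finite _) (addColumn (m + 1))
    (fun f => addColumn 1 (addColumn m f)) (fun f hf => addColumn_mem hf)
    (fun f hf => addColumn_addColumn_mem hm hf) (addColumn_injective _).injOn
    ((addColumn_injective _).comp (addColumn_injective _)).injOn ?_
  intro f hf g hg h
  have h1 := congrFun h m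
  simp only [addColumn, upper_eq_zero hf le_rfl, upper_eq_zero hg le_rfl] at h1
  split_ifs at h1 <;> omega

/-! ### The case `m = 3` -/

/-- The sequence of entries of a list, padded with zeros. -/
def ofList (l : List ℕ) : ℕ → ℕ := fun i => l.getD i 0

lemma ofList_eq_zero {l : List ℕ} (hl : l.length ≤ 6) {i : ℕ} (hi : 6 ≤ i) : ofList l i = 0 := by
  simp [ofList, List.getElem?_eq_none (hl.trans hi)]

lemma isPartitionOf_ofList {l : List ℕ} (hl : l.length ≤ 6)
    (h1 : ∀ i < 6, ofList l (i + 1) ≤ ofList l i)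
    (h2 : ∑ i ∈ Finset.range 6, ofList l i = 6) : IsPartitionOf 6 (ofList l) := by
  refine ⟨?_, fun i hi => ofList_eq_zero hl hi, h2⟩
  have : Antitone (ofList l) := antitone_nat_of_succ_le fun i => by
    by_cases hi : i < 6
    · exact h1 i hi
    · rw [ofList_eq_zero hl (by omega)]
      exact Nat.zero_le _
  exact fun i j hij => this hij

lemma isPartitionOf_staircase_three : IsPartitionOf 6 (staircase 3) := by
  refine ⟨fun i j h => ?_, fun i h => ?_, by decide⟩ <;> simp only [staircase] <;> omega

lemma dominatedBy_of_le_six {f g : ℕ → ℕ} (hf : IsPartitionOf 6 f) (hg : IsPartitionOf 6 g)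
    (h : ∀ k < 6, ∑ i ∈ Finset.range k, f i ≤ ∑ i ∈ Finset.range k, g i) : DominatedBy f g := by
  intro k
  by_cases hk : k < 6
  · exact h k hk
  · rw [sum_eq_of_le hf (by omega), sum_eq_of_le hg (by omega)]

lemma ofList_mem_lower {l : List ℕ} (hl : l.length ≤ 6)
    (h1 : ∀ i < 6, ofList l (i + 1) ≤ ofList l i)
    (h2 : ∑ i ∈ Finset.range 6, ofList l i = 6)
    (h3 : ∀ k < 6, ∑ i ∈ Finset.range k, ofList l i ≤ ∑ i ∈ Finset.range k, staircase 3 i)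
    (h4 : ofList l 0 ≠ 3 ∨ ofList l 1 ≠ 2) : ofList l ∈ belowStaircase 3 := by
  have hp := isPartitionOf_ofList hl h1 h2
  refine ⟨hp, dominatedBy_of_le_six hp isPartitionOf_staircase_three h3, fun h => ?_⟩
  rw [h] at h4
  simp [staircase] at h4

lemma ofList_mem_upper {l : List ℕ} (hl : l.length ≤ 6)
    (h1 : ∀ i < 6, ofList l (i + 1) ≤ ofList l i)
    (h2 : ∑ i ∈ Finset.range 6, ofList l i = 6)
    (h3 : ∀ k < 6, ∑ i ∈ Finset.range k, staircase 3 i ≤ ∑ i ∈ Finset.range k, ofList l i)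
    (h4 : ofList l 0 ≠ 3 ∨ ofList l 1 ≠ 2) : ofList l ∈ aboveStaircase 3 := by
  have hp := isPartitionOf_ofList hl h1 h2
  refine ⟨hp, dominatedBy_of_le_six isPartitionOf_staircase_three hp h3, fun h => ?_⟩
  rw [h] at h4
  simp [staircase] at h4

lemma four_le_ncard {A : Set (ℕ → ℕ)} (hA : A.Finite) (F : Fin 4 → List ℕ)
    (hF : ∀ i, ofList (F i) ∈ A)
    (hinj : ∀ i j, (∀ k < 6, ofList (F i) k = ofList (F j) k) → i = j) : 4 ≤ A.ncard := by
  have hi : Function.Injective fun i => ofList (F i) :=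
    fun i j h => hinj i j fun k _ => congrFun h k
  have h1 : Set.range (fun i => ofList (F i)) ⊆ A := by
    rintro _ ⟨i, rfl⟩
    exact hF i
  have h2 := Set.ncard_le_ncard h1 hA
  rwa [← Set.image_univ, Set.ncard_image_of_injective _ hi, Set.ncard_univ,
    Nat.card_eq_fintype_card, Fintype.card_fin] at h2

lemma lower_three : 4 ≤ (belowStaircase 3).ncard := by
  refine four_le_ncard (lower_finite 3)
    ![[3, 1, 1, 1], [2, 2, 2], [2, 2, 1, 1], [2, 1, 1, 1, 1]] ?_ (by decide)
  intro i
  fin_cases i <;> exact ofList_mem_lower (by decide) (by decide) (by decide) (by decide) (by decide)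

lemma upper_three : 4 ≤ (aboveStaircase 3).ncard := by
  refine four_le_ncard (upper_finite 3) ![[4, 1, 1], [3, 3], [4, 2], [5, 1]] ?_ (by decide)
  intro i
  fin_cases i <;> exact ofList_mem_upper (by decide) (by decide) (by decide) (by decide) (by decide)

/-! ### Conclusion -/

lemma pow_le_of_double {a : ℕ → ℕ} (h3 : 4 ≤ a 3) (h : ∀ m, 1 ≤ m → 2 * a m ≤ a (m + 1))
    {m : ℕ} (hm : 3 ≤ m) : 2 ^ (m - 1) ≤ a m := by
  induction m, hm using Nat.le_induction with
  | base => exact h3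
  | succ m hm ih =>
    have e : 2 ^ (m + 1 - 1) = 2 * 2 ^ (m - 1) := by
      rw [← pow_succ']
      congr 1
      omega
    have := h m (by omega)
    omega

/-- For `m ≥ 3` there are at least `2^m` partitions of `m(m+1)/2`
comparable in dominance order to `ρ_m`; in particular at least `2^(m-1)` partitions
strictly dominated by `ρ_m`. -/
theorem stmt0 (m : ℕ) (hm : 3 ≤ m) :
    2 ^ m ≤ Set.ncard {f : ℕ → ℕ | IsPartitionOf (m * (m + 1) / 2) f ∧
      (DominatedBy f (staircase m) ∨ DominatedBy (staircase m) f)} ∧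
    2 ^ (m - 1) ≤ Set.ncard {f : ℕ → ℕ | IsPartitionOf (m * (m + 1) / 2) f ∧
      DominatedBy f (staircase m) ∧ f ≠ staircase m} := by
  have hL : 2 ^ (m - 1) ≤ (belowStaircase m).ncard :=
    pow_le_of_double (a := fun m => (belowStaircase m).ncard) lower_three (fun _ h => lower_double h) hm
  have hU : 2 ^ (m - 1) ≤ (aboveStaircase m).ncard :=
    pow_le_of_double (a := fun m => (aboveStaircase m).ncard) upper_three (fun _ h => upper_double h) hm
  refine ⟨?_, hL⟩
  have hdis : Disjoint (belowStaircase m) (aboveStaircase m) := by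
    rw [Set.disjoint_left]
    intro f hf hf'
    exact hf.2.2 (dominated_antisymm hf.2.1 hf'.2.1)
  have hsub : belowStaircase m ∪ aboveStaircase m ⊆ {f : ℕ → ℕ | IsPartitionOf (m * (m + 1) / 2) f ∧
      (DominatedBy f (staircase m) ∨ DominatedBy (staircase m) f)} := by
    rintro f (hf | hf)
    · exact ⟨hf.1, Or.inl hf.2.1⟩
    · exact ⟨hf.1, Or.inr hf.2.1⟩
  have h := Set.ncard_le_ncard hsub ((finite_partitions _).subset fun _ h => h.1)
  rw [Set.ncard_union_eq hdis (lower_finite m) (upper_finite m)] at h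
  have e : 2 ^ m = 2 * 2 ^ (m - 1) := by
    rw [← pow_succ']
    congr 1
    omega
  omega
end

section
/- Let k ≥ 1 and let m ≥ 4k² + 4k − 1 be integers, and let a_1, …, a_k and b_1, …, b_k be nonnegative integers satisfying m(m+1)/2 = k² + Σ_{i=1}^{k} i·a_i + Σ_{i=1}^{k} i·b_i. Then there exists an index i with 1 ≤ i ≤ k such that a_i ≥ 2m − 2i + 1 or b_i ≥ 2m − 2i + 1. -/
/-!
If every `a_i` and `b_i` were at most `2m - 2i`, then `i * a_i + 2 * i ^ 2 ≤ 2 * m * i`. Summing over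
`i` and keeping only the term `i = k` of `∑ 2 * i ^ 2`, each of the arm and leg weights is at most
`m * k * (k + 1) - 2 * k ^ 2` (`weight_bound`), so the size of the partition is at most
`2 * m * k * (k + 1) - 3 * k ^ 2`. But `m + 1 ≥ 4 * k * (k + 1)` makes `m * (m + 1) / 2` at least
`2 * m * k * (k + 1)`, a contradiction.
-/

/-- The bound on an arm or leg weight when no multiplicity reaches `2m - 2i + 1`. -/
lemma weight_bound (k m : ℕ) (hk : 1 ≤ k) (hkm : k ≤ m) (c : ℕ → ℕ)
    (hc : ∀ i ∈ Finset.Icc 1 k, c i < 2 * m - 2 * i + 1) :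
    (∑ i ∈ Finset.Icc 1 k, i * c i) + 2 * k ^ 2 ≤ m * (k * (k + 1)) := by
  have gauss : ∀ n : ℕ, ∑ i ∈ Finset.Icc 1 n, 2 * m * i = m * (n * (n + 1)) := by
    intro n
    induction n with
    | zero => simp
    | succ n ih => rw [Finset.sum_Icc_succ_top (by omega), ih]; ring
  have hlast : 2 * k ^ 2 ≤ ∑ i ∈ Finset.Icc 1 k, 2 * i ^ 2 :=
    Finset.single_le_sum (f := fun i => 2 * i ^ 2) (fun _ _ => Nat.zero_le _)
      (Finset.mem_Icc.mpr ⟨hk, le_rfl⟩)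
  have hterm : ∑ i ∈ Finset.Icc 1 k, (i * c i + 2 * i ^ 2) ≤ ∑ i ∈ Finset.Icc 1 k, 2 * m * i := by
    refine Finset.sum_le_sum fun i hi => ?_
    have h1 := hc i hi
    have h2 := (Finset.mem_Icc.mp hi).2
    have h3 : c i + 2 * i ≤ 2 * m := by omega
    nlinarith [Nat.mul_le_mul_left i h3]
  rw [Finset.sum_add_distrib, gauss] at hterm
  omega

/-- if `m ≥ 4k² + 4k - 1` and
`m(m+1)/2 = k² + Σ_{i=1}^k i·a_i + Σ_{i=1}^k i·b_i`, then some `i` with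
`1 ≤ i ≤ k` satisfies `a_i ≥ 2m - 2i + 1` or `b_i ≥ 2m - 2i + 1`. -/
theorem stmt5 (k m : ℕ) (hk : 1 ≤ k) (hm : 4 * k ^ 2 + 4 * k - 1 ≤ m)
    (a b : ℕ → ℕ)
    (hsum : m * (m + 1) / 2 =
      k ^ 2 + (∑ i ∈ Finset.Icc 1 k, i * a i) + ∑ i ∈ Finset.Icc 1 k, i * b i) :
    ∃ i ∈ Finset.Icc 1 k, 2 * m - 2 * i + 1 ≤ a i ∨ 2 * m - 2 * i + 1 ≤ b i := by
  by_contra! h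
  have hkm : k ≤ m := by omega
  have hA := weight_bound k m hk hkm a fun i hi => (h i hi).1
  have hB := weight_bound k m hk hkm b fun i hi => (h i hi).2
  have heven : m * (m + 1) / 2 * 2 = m * (m + 1) :=
    Nat.div_mul_cancel (Nat.even_mul_succ_self m).two_dvd
  have hm' : 4 * (k * (k + 1)) ≤ m + 1 := by
    have : 4 * (k * (k + 1)) = 4 * k ^ 2 + 4 * k := by ring
    omega
  have hlow := Nat.mul_le_mul_left m hm'
  have hkpos : 0 < k ^ 2 := by positivity
  rw [hsum] at heven
  nlinarith
end

section
/- Let m be an even positive integer and let k be an integer with 0 ≤ k ≤ m. Then there exists a self-conjugate partition λ of m(m+1)/2 + k such that ρ_m ⊆ λ ⊆ ρ_{m+1}, where ⊆ denotes containment of Young diagrams. -/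
/-- The rows `i` of the added cells `(i, 2a - i)`: the first `k / 2` and the last `k / 2` of
`0, …, 2a`, and the middle one `a` when `k` is odd. -/
def AddedRow (a k i : ℕ) : Prop :=
  i ≤ 2 * a ∧ (i < k / 2 ∨ 2 * a < i + k / 2 ∨ (k % 2 = 1 ∧ i = a))

instance (a k i : ℕ) : Decidable (AddedRow a k i) := by unfold AddedRow; infer_instance

/-- The staircase `ρ_{2a}` with the cells in the rows `AddedRow a k` added. -/
def filledStaircase (a k i : ℕ) : ℕ := (2 * a - i) + if AddedRow a k i then 1 else 0

/-- The number of added rows among the first `t`, in closed form; `t = 2 * a + 1` gives `k`. -/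
lemma sum_addedRow (a k t : ℕ) (hk : k ≤ 2 * a) (ht : t ≤ 2 * a + 1) :
    ∑ i ∈ Finset.range t, (if AddedRow a k i then 1 else 0) =
      min t (k / 2) + (t - (2 * a + 1 - k / 2)) + if k % 2 = 1 ∧ a < t then 1 else 0 := by
  induction t with
  | zero => simp
  | succ t ih =>
    rw [Finset.sum_range_succ, ih (by omega)]
    clear ih
    split_ifs <;> simp only [AddedRow] at * <;> omega

lemma lt_filledStaircase_comm (a k i j : ℕ) :
    i < filledStaircase a k j ↔ j < filledStaircase a k i := by
  unfold filledStaircase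
  split_ifs <;> simp only [AddedRow] at * <;> omega

lemma sum_filledStaircase (a k : ℕ) (hk : k ≤ 2 * a) :
    ∑ i ∈ Finset.range (2 * a + 1), filledStaircase a k i = 2 * a * (2 * a + 1) / 2 + k := by
  unfold filledStaircase
  rw [Finset.sum_add_distrib, sum_addedRow a k _ hk le_rfl]
  have h := Finset.sum_range_reflect (fun i => i) (2 * a + 1)
  have hg := Finset.sum_range_id (2 * a + 1)
  simp only [Nat.add_sub_cancel] at h hg
  rw [h, hg, mul_comm (2 * a + 1)]
  split_ifs <;> omega

/-- for even `m > 0` and `0 ≤ k ≤ m` there is a self-conjugate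
partition `λ` of `m(m+1)/2 + k` with `ρ_m ⊆ λ ⊆ ρ_{m+1}` (Young-diagram
containment). -/
theorem stmt16 (m k : ℕ) (hm : 0 < m) (heven : Even m) (hk : k ≤ m) :
    ∃ l : ℕ → ℕ, IsPartitionOf (m * (m + 1) / 2 + k) l ∧ conjugate l = l ∧
      (∀ i, staircase m i ≤ l i) ∧ (∀ i, l i ≤ staircase (m + 1) i) := by
  obtain ⟨a, rfl⟩ := heven
  rw [← two_mul] at *
  have hzero : ∀ i, 2 * a + 1 ≤ i → filledStaircase a k i = 0 := by
    intro i hi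
    unfold filledStaircase
    split_ifs <;> simp only [AddedRow] at * <;> omega
  -- `m ≥ 2`, so the size `n` of the partition is at least the number `m + 1` of rows of `ρ_{m+1}`.
  have hsize : 2 * a + 1 ≤ 2 * a * (2 * a + 1) / 2 + k := by
    have : 2 * a * (2 * a + 1) / 2 = a * (2 * a + 1) := by
      rw [mul_assoc, Nat.mul_div_cancel_left _ two_pos]
    have ha : 1 ≤ a := by omega
    nlinarith
  refine ⟨filledStaircase a k, ⟨?_, fun i hi => hzero i (hsize.trans hi), ?_⟩, ?_, ?_, ?_⟩
  · intro i j hij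
    unfold filledStaircase
    split_ifs <;> simp only [AddedRow] at * <;> omega
  · rw [← Finset.sum_subset (Finset.range_mono hsize)
      (fun i _ hi => hzero i (by simpa using hi))]
    exact sum_filledStaircase a k hk
  · funext i
    have : {j | i < filledStaircase a k j} = (Finset.range (filledStaircase a k i) : Set ℕ) := by
      ext j
      simp [lt_filledStaircase_comm a k i j]
    rw [conjugate, this, Set.ncard_coe_finset, Finset.card_range]
  · intro i
    exact Nat.le_add_right _ _
  · intro i
    unfold filledStaircase staircase
    split_ifs <;> simp only [AddedRow] at * <;> omega
end

section
/- Let m be an odd positive integer and let k be an even integer with 0 ≤ k ≤ m. Then there exists a self-conjugate partition λ of m(m+1)/2 + k such that ρ_m ⊆ λ ⊆ ρ_{m+1}, where ⊆ denotes containment of Young diagrams. -/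
/-- The staircase `ρ_m` with the corner cells in rows `i < t` and in rows `m - t < i ≤ m` added. -/
def cornerStaircase (m t : ℕ) : ℕ → ℕ := fun i =>
  (m - i) + ((if i < t then 1 else 0) + (if m < i + t ∧ i ≤ m then 1 else 0))

/-- The cell `(i, j)` lies in the diagram if and only if `(j, i)` does. -/
theorem lt_cornerStaircase_comm {m t : ℕ} (ht : 2 * t ≤ m) (i j : ℕ) :
    i < cornerStaircase m t j ↔ j < cornerStaircase m t i := by
  unfold cornerStaircase
  split_ifs <;> omega

theorem conjugate_cornerStaircase {m t : ℕ} (ht : 2 * t ≤ m) :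
    conjugate (cornerStaircase m t) = cornerStaircase m t := by
  funext i
  have h : {j | i < cornerStaircase m t j}
      = (Finset.range (cornerStaircase m t i) : Set ℕ) := by
    ext j
    simp [lt_cornerStaircase_comm ht i j]
  rw [conjugate, h, Set.ncard_coe_finset, Finset.card_range]

theorem sum_range_staircase (m d : ℕ) :
    ∑ i ∈ Finset.range (m + d), (m - i) = m * (m + 1) / 2 := by
  induction d with
  | zero =>
    have h := Finset.sum_range_reflect (fun i => i + 1) m
    have h' : ∑ i ∈ Finset.range m, (m - i) = ∑ i ∈ Finset.range m, (m - 1 - i + 1) :=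
      Finset.sum_congr rfl fun i hi => by
        have := Finset.mem_range.mp hi
        omega
    have hg := Finset.sum_range_succ' (fun i => i) m
    have hid := Finset.sum_range_id (m + 1)
    rw [Nat.add_sub_cancel, mul_comm] at hid
    rw [Nat.add_zero, h', h, ← hid]
    simpa using hg.symm
  | succ d ih => rw [← add_assoc, Finset.sum_range_succ, ih]; omega

theorem sum_range_top (t N : ℕ) :
    ∑ i ∈ Finset.range N, (if i < t then 1 else 0) = min N t := by
  induction N with
  | zero => simp
  | succ N ih => rw [Finset.sum_range_succ, ih]; split_ifs <;> omega

theorem sum_range_bottom (m t N : ℕ) :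
    ∑ i ∈ Finset.range N, (if m < i + t ∧ i ≤ m then 1 else 0)
      = min N (m + 1) - (m + 1 - t) := by
  induction N with
  | zero => simp
  | succ N ih => rw [Finset.sum_range_succ, ih]; split_ifs <;> omega

/-- for odd `m > 0` and even `0 ≤ k ≤ m` there is a self-conjugate
partition `λ` of `m(m+1)/2 + k` with `ρ_m ⊆ λ ⊆ ρ_{m+1}` (Young-diagram
containment). -/
theorem stmt17 (m k : ℕ) (hm : 0 < m) (hmo : Odd m) (hke : Even k) (hk : k ≤ m) :
    ∃ l : ℕ → ℕ, IsPartitionOf (m * (m + 1) / 2 + k) l ∧ conjugate l = l ∧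
      (∀ i, staircase m i ≤ l i) ∧ (∀ i, l i ≤ staircase (m + 1) i) := by
  obtain ⟨t, rfl⟩ := hke
  have ht : 2 * t ≤ m := by omega
  have hle : m ≤ m * (m + 1) / 2 := by
    rw [Nat.le_div_iff_mul_le two_pos]
    exact Nat.mul_le_mul_left m (by omega)
  refine ⟨cornerStaircase m t, ⟨?_, ?_, ?_⟩, conjugate_cornerStaircase ht, ?_, ?_⟩
  · intro i j hij
    unfold cornerStaircase
    split_ifs <;> omega
  · intro i hi
    unfold cornerStaircase
    split_ifs <;> omega
  · obtain ⟨d, hd⟩ := Nat.exists_eq_add_of_le (hle.trans (Nat.le_add_right _ (t + t)))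
    have h := sum_range_staircase m d
    rw [← hd] at h
    simp only [cornerStaircase, Finset.sum_add_distrib]
    rw [h, sum_range_top, sum_range_bottom]
    omega
  · intro i
    unfold cornerStaircase staircase
    omega
  · intro i
    unfold cornerStaircase staircase
    split_ifs <;> omega
end

section
/- Let m ≥ 3 and k be odd positive integers with k ≤ m. Then there exists a self-conjugate partition λ of m(m+1)/2 + k such that ρ_{m−1} ⊆ λ ⊆ ρ_{m+2}, where ⊆ denotes containment of Young diagrams. Moreover, if k = 1 one can choose λ with ρ_{m−1} ⊆ λ ⊆ ρ_{m+1}, and if k ≥ 3 one can choose λ with ρ_m ⊆ λ ⊆ ρ_{m+2}. -/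
/-!
Write `m = 2n + 1` and index the cells of a diagram by `(i, j)`, `i, j ≥ 0`, so that `ρ_m` consists
of the cells with `i + j < m` and its outermost antidiagonal `i + j = m - 1` meets the main diagonal
in `(n, n)`.

* For `k = 1`, remove the corner `(n, n)` from `ρ_m` and add the pair `(0, m)`, `(m, 0)`.
* For `k = 2t + 3`, add to `ρ_m` the hook `(n, n+1)`, `(n+1, n)`, `(n+1, n+1)` and the `t` pairs
  `(i, m - i)`, `(m - i, i)` with `i < t`. As `k ≤ m` gives `t ≤ n - 1`, these cells are distinct.

A sequence `l` is a self-conjugate partition as soon as its diagram is symmetric, that is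
`j < l i ↔ i < l j` (`conjugate_eq_of_symm`, `antitone_of_symm`), and this is linear arithmetic for
the two explicit families. Their sizes are obtained by comparing row by row with `ρ_m`.
-/

theorem conjugate_eq_of_symm {l : ℕ → ℕ} (h : ∀ i j, j < l i ↔ i < l j) : conjugate l = l := by
  funext i
  have hs : {j | i < l j} = ((Finset.range (l i) : Finset ℕ) : Set ℕ) := by
    ext j
    simp [h i j]
  simp only [conjugate, hs, Set.ncard_coe_finset, Finset.card_range]

theorem antitone_of_symm {l : ℕ → ℕ} (h : ∀ i j, j < l i ↔ i < l j) (i j : ℕ) (hij : i ≤ j) :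
    l j ≤ l i := by
  by_contra! hlt
  have := (h j (l i)).1 hlt
  exact lt_irrefl _ ((h i (l i)).2 (by omega))

theorem sum_staircase (m N : ℕ) (h : m ≤ N) :
    ∑ i ∈ Finset.range N, (m - i) = m * (m + 1) / 2 := by
  have h1 : ∑ i ∈ Finset.range N, (m - i) = ∑ i ∈ Finset.range (m + 1), (m - i) := by
    rcases Nat.eq_or_lt_of_le h with rfl | h
    · simp [Finset.sum_range_succ]
    · symm
      apply Finset.sum_subset
      · intro i
        simp only [Finset.mem_range]
        omega
      · intro i _ hi
        simp only [Finset.mem_range] at hi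
        omega
  have h2 := Finset.sum_range_reflect (fun i => i) (m + 1)
  simp only [Nat.add_sub_cancel] at h2
  rw [h1, h2, Finset.sum_range_id, Nat.add_sub_cancel, Nat.mul_comm]

/-- Row lengths of `ρ_{2n+1}` with the corner `(n, n)` removed and the cells `(0, 2n+1)`,
`(2n+1, 0)` added. -/
def swapDiagram (n i : ℕ) : ℕ :=
  if i = 0 then 2 * n + 2 else if i = n then n else if i = 2 * n + 1 then 1 else 2 * n + 1 - i

/-- Row lengths of `ρ_{2n+1}` with the cells `(n, n+1)`, `(n+1, n)`, `(n+1, n+1)` and the pairs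
`(i, 2n+1-i)`, `(2n+1-i, i)` for `i < t` added (intended for `t < n`). -/
def hookDiagram (n t i : ℕ) : ℕ :=
  if i < t then 2 * n + 2 - i else if i = n then n + 2 else if i = n + 1 then n + 2
  else if 2 * n + 1 < i + t then 2 * n + 2 - i else 2 * n + 1 - i

theorem swapDiagram_symm (n : ℕ) (hn : 1 ≤ n) (i j : ℕ) :
    j < swapDiagram n i ↔ i < swapDiagram n j := by
  unfold swapDiagram
  split_ifs <;> omega

theorem hookDiagram_symm (n t : ℕ) (ht : t < n) (i j : ℕ) :
    j < hookDiagram n t i ↔ i < hookDiagram n t j := by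
  unfold hookDiagram
  split_ifs <;> omega

theorem sum_swapDiagram (n N : ℕ) (hn : 1 ≤ n) (hN : 2 * n + 2 ≤ N) :
    ∑ i ∈ Finset.range N, swapDiagram n i = (2 * n + 1) * (2 * n + 1 + 1) / 2 + 1 := by
  have hrow : ∀ i, swapDiagram n i + (if i = n then 1 else 0) =
      (2 * n + 1 - i) + ((if i = 0 then 1 else 0) + (if i = 2 * n + 1 then 1 else 0)) := by
    intro i
    unfold swapDiagram
    split_ifs <;> omega
  have hsum := Finset.sum_congr (rfl : Finset.range N = Finset.range N) (fun i _ => hrow i)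
  simp only [Finset.sum_add_distrib, Finset.sum_ite_eq', Finset.mem_range,
    sum_staircase (2 * n + 1) N (by omega)] at hsum
  rw [if_pos (by omega), if_pos (by omega), if_pos (by omega)] at hsum
  omega

theorem sum_hookDiagram (n t N : ℕ) (ht : t < n) (hN : 2 * n + 2 ≤ N) :
    ∑ i ∈ Finset.range N, hookDiagram n t i =
      (2 * n + 1) * (2 * n + 1 + 1) / 2 + (2 * t + 3) := by
  have hrow : ∀ i, hookDiagram n t i = (2 * n + 1 - i) + ((if i < t then 1 else 0) +
      (if 2 * n + 1 - t < i ∧ i ≤ 2 * n + 1 then 1 else 0) +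
      (if i = n then 1 else 0) + (if i = n + 1 then 2 else 0)) := by
    intro i
    unfold hookDiagram
    split_ifs <;> omega
  have hlow : (Finset.range N).filter (fun i => i < t) = Finset.range t := by
    ext i
    simp only [Finset.mem_filter, Finset.mem_range]
    omega
  have hhigh : (Finset.range N).filter (fun i => 2 * n + 1 - t < i ∧ i ≤ 2 * n + 1) =
      Finset.Ioc (2 * n + 1 - t) (2 * n + 1) := by
    ext i
    simp only [Finset.mem_filter, Finset.mem_range, Finset.mem_Ioc]
    omega
  simp only [hrow, Finset.sum_add_distrib, Finset.sum_ite_eq', Finset.mem_range,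
    sum_staircase (2 * n + 1) N (by omega), Finset.sum_boole, hlow, hhigh, Finset.card_range,
    Nat.card_Ioc, Nat.cast_id]
  rw [if_pos (by omega), if_pos (by omega)]
  omega

/-- for odd `m ≥ 3` and odd positive `k ≤ m` there is a
self-conjugate partition `λ` of `m(m+1)/2 + k` with `ρ_{m-1} ⊆ λ ⊆ ρ_{m+2}`;
moreover, if `k = 1` one can take `ρ_{m-1} ⊆ λ ⊆ ρ_{m+1}`, and if `k ≥ 3` one can
take `ρ_m ⊆ λ ⊆ ρ_{m+2}`. -/
theorem stmt19 (m k : ℕ) (hm : 3 ≤ m) (hmo : Odd m) (hko : Odd k) (hkpos : 0 < k)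
    (hk : k ≤ m) :
    (∃ l : ℕ → ℕ, IsPartitionOf (m * (m + 1) / 2 + k) l ∧ conjugate l = l ∧
      (∀ i, staircase (m - 1) i ≤ l i) ∧ (∀ i, l i ≤ staircase (m + 2) i)) ∧
    (k = 1 → ∃ l : ℕ → ℕ, IsPartitionOf (m * (m + 1) / 2 + k) l ∧ conjugate l = l ∧
      (∀ i, staircase (m - 1) i ≤ l i) ∧ (∀ i, l i ≤ staircase (m + 1) i)) ∧
    (3 ≤ k → ∃ l : ℕ → ℕ, IsPartitionOf (m * (m + 1) / 2 + k) l ∧ conjugate l = l ∧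
      (∀ i, staircase m i ≤ l i) ∧ (∀ i, l i ≤ staircase (m + 2) i)) := by
  obtain ⟨n, rfl⟩ := hmo
  have hn : 1 ≤ n := by omega
  have hhalf : (2 * n + 1) * (2 * n + 1 + 1) / 2 = (2 * n + 1) * (n + 1) := by
    rw [show (2 * n + 1) * (2 * n + 1 + 1) = (2 * n + 1) * (n + 1) * 2 by ring,
      Nat.mul_div_cancel _ (by norm_num)]
  have hN : 2 * n + 2 ≤ (2 * n + 1) * (2 * n + 1 + 1) / 2 + k := by
    rw [hhalf]
    nlinarith
  have h1 : k = 1 → ∃ l : ℕ → ℕ, IsPartitionOf ((2 * n + 1) * (2 * n + 1 + 1) / 2 + k) l ∧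
      conjugate l = l ∧ (∀ i, staircase (2 * n + 1 - 1) i ≤ l i) ∧
      (∀ i, l i ≤ staircase (2 * n + 1 + 1) i) := by
    rintro rfl
    have hsymm := swapDiagram_symm n hn
    refine ⟨swapDiagram n, ⟨antitone_of_symm hsymm, fun i hi => ?_, sum_swapDiagram n _ hn hN⟩,
      conjugate_eq_of_symm hsymm, fun i => ?_, fun i => ?_⟩
    · have hi' := hN.trans hi
      unfold swapDiagram
      split_ifs <;> omega
    all_goals
      unfold swapDiagram staircase
      split_ifs <;> omega
  have h3 : 3 ≤ k → ∃ l : ℕ → ℕ, IsPartitionOf ((2 * n + 1) * (2 * n + 1 + 1) / 2 + k) l ∧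
      conjugate l = l ∧ (∀ i, staircase (2 * n + 1) i ≤ l i) ∧
      (∀ i, l i ≤ staircase (2 * n + 1 + 2) i) := by
    intro hk3
    obtain ⟨t, rfl⟩ : ∃ t, k = 2 * t + 3 := by
      obtain ⟨s, rfl⟩ := hko
      exact ⟨s - 1, by omega⟩
    have ht : t < n := by omega
    have hsymm := hookDiagram_symm n t ht
    refine ⟨hookDiagram n t, ⟨antitone_of_symm hsymm, fun i hi => ?_, sum_hookDiagram n t _ ht hN⟩,
      conjugate_eq_of_symm hsymm, fun i => ?_, fun i => ?_⟩
    · have hi' := hN.trans hi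
      unfold hookDiagram
      split_ifs <;> omega
    all_goals
      unfold hookDiagram staircase
      split_ifs <;> omega
  refine ⟨?_, h1, h3⟩
  rcases (show k = 1 ∨ 3 ≤ k by obtain ⟨s, rfl⟩ := hko; omega) with hk1 | hk3
  · obtain ⟨l, hl, hc, hlo, hhi⟩ := h1 hk1
    exact ⟨l, hl, hc, hlo, fun i => (hhi i).trans (by unfold staircase; omega)⟩
  · obtain ⟨l, hl, hc, hlo, hhi⟩ := h3 hk3
    exact ⟨l, hl, hc, fun i => le_trans (by unfold staircase; omega) (hlo i), hhi⟩
end
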